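/- For all positive integers dA, dB and every integer r with 1 ≤ r ≤ min(dA,dB), the set S_r of density matrices on ℂ^{dA}⊗ℂ^{dB} with Schmidt number at most r is a convex and compact subset of the space of complex matrices indexed by (Fin dA × Fin dB) × (Fin dA × Fin dB). -/

import Mathlib

open Matrix
open scoped Kronecker ComplexOrder

/-- The Schmidt rank of a bipartite vector `ψ : m × n → ℂ`, i.e. the rank of the
matrix `C_ψ` with `(C_ψ)_{ij} = ψ (i, j)`. -/
noncomputable def schmidtRank {m n : Type*} [Fintype m] [Fintype n] (ψ : m × n → ℂ) : ℕ :=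
  (Matrix.of fun i j => ψ (i, j)).rank

/-- A matrix `ρ` indexed by `m × n` has Schmidt number at most `r` if it can be written
as `∑_k ψ_k ψ_k†` with each `ψ_k` of Schmidt rank at most `r`. -/
def SchmidtNumberLE {m n : Type*} [Fintype m] [Fintype n]
    (ρ : Matrix (m × n) (m × n) ℂ) (r : ℕ) : Prop :=
  ∃ (k : ℕ) (ψ : Fin k → m × n → ℂ),
    (∀ i, schmidtRank (ψ i) ≤ r) ∧
    ρ = ∑ i, Matrix.vecMulVec (ψ i) (star (ψ i))

/-- The Schmidt number: the least `r` such that `SchmidtNumberLE ρ r`. -/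
noncomputable def schmidtNumber {m n : Type*} [Fintype m] [Fintype n]
    (ρ : Matrix (m × n) (m × n) ℂ) : ℕ :=
  sInf {r | SchmidtNumberLE ρ r}

/-- A density matrix: positive semidefinite with unit trace. -/
def IsDensityMatrix {n : Type*} [Fintype n] (ρ : Matrix n n ℂ) : Prop :=
  ρ.PosSemidef ∧ ρ.trace = 1

/-- An effect: a Hermitian matrix `M` with `0 ≤ M ≤ I`. -/
def IsEffect {n : Type*} [Fintype n] [DecidableEq n] (M : Matrix n n ℂ) : Prop :=
  M.PosSemidef ∧ (1 - M).PosSemidef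

/-- The maximally entangled unit vector `|Φ⁺_d⟩ = (1/√d) ∑ᵢ e_{(i,i)}`. -/
noncomputable def maxEnt (d : ℕ) : Fin d × Fin d → ℂ :=
  fun p => if p.1 = p.2 then ((1 / Real.sqrt d : ℝ) : ℂ) else 0

/-- The projector `P_d = |Φ⁺_d⟩⟨Φ⁺_d|`. -/
noncomputable def projME (d : ℕ) : Matrix (Fin d × Fin d) (Fin d × Fin d) ℂ :=
  Matrix.vecMulVec (maxEnt d) (star (maxEnt d))

/-- The isotropic state `ρ^iso_d(p) = p P_d + (1−p) I/d²`. -/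
noncomputable def isoState (d : ℕ) (p : ℝ) : Matrix (Fin d × Fin d) (Fin d × Fin d) ℂ :=
  (p : ℂ) • projME d + (((1 - p) / (d ^ 2 : ℝ) : ℝ) : ℂ) • 1

/-- `|φ₂⁺⟩ = (1/√2)(e_{(0,0)} + e_{(1,1)}) ∈ ℂ⁸⊗ℂ⁸`. -/
noncomputable def phi2 : Fin 8 × Fin 8 → ℂ :=
  fun q => if q = (0, 0) ∨ q = (1, 1) then ((1 / Real.sqrt 2 : ℝ) : ℂ) else 0

/-- `ρ̃(λ) = λ ρ^iso₈(0.24) + (1−λ)|φ₂⁺⟩⟨φ₂⁺|`. -/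
noncomputable def rhoTilde (l : ℝ) : Matrix (Fin 8 × Fin 8) (Fin 8 × Fin 8) ℂ :=
  (l : ℂ) • isoState 8 0.24 + ((1 - l : ℝ) : ℂ) • Matrix.vecMulVec phi2 (star phi2)

theorem aux_isCompact_convexHull {E : Type*} [AddCommGroup E] [Module ℝ E] [TopologicalSpace E]
    [ContinuousAdd E] [ContinuousSMul ℝ E] [FiniteDimensional ℝ E] {s : Set E}
    (hs : IsCompact s) : IsCompact (convexHull ℝ s) := by
  classical
  let N := Module.finrank ℝ E + 1
  have himg : convexHull ℝ s = (fun p : (Fin N → ℝ) × (Fin N → E) => ∑ i, p.1 i • p.2 i) ''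
      (stdSimplex ℝ (Fin N) ×ˢ Set.pi Set.univ (fun _ => s)) := by
    apply Set.Subset.antisymm
    · intro x hx
      have hne : s.Nonempty := convexHull_nonempty_iff.1 ⟨x, hx⟩
      obtain ⟨z0, hz0⟩ := hne
      obtain ⟨ι, _, z, w, hz, hai, hw, hw1, hx⟩ := eq_pos_convex_span_of_mem_convexHull hx
      have hcard : Fintype.card ι ≤ Fintype.card (Fin N) := by
        rw [Fintype.card_fin]
        exact hai.card_le_finrank_succ.trans
          (Nat.succ_le_succ (Submodule.finrank_le _))
      obtain ⟨e⟩ := Function.Embedding.nonempty_of_card_le hcard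
      have hein := e.injective
      refine ⟨(Function.extend e w 0, Function.extend e z (fun _ => z0)), ⟨⟨?_, ?_⟩, ?_⟩, ?_⟩
      · intro j
        by_cases hj : ∃ i, e i = j
        · obtain ⟨i, rfl⟩ := hj
          simpa [hein.extend_apply] using (hw i).le
        · simp [Function.extend_apply' _ _ _ hj]
      · rw [← hw1]
        symm
        apply Fintype.sum_of_injective e hein
        · intro j hj
          exact Function.extend_apply' _ _ _ hj
        · intro i
          simp [hein.extend_apply]
      · intro j _
        by_cases hj : ∃ i, e i = j
        · obtain ⟨i, rfl⟩ := hj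
          simpa [hein.extend_apply] using hz ⟨i, rfl⟩
        · simpa [Function.extend_apply' _ _ _ hj] using hz0
      · rw [← hx]
        symm
        apply Fintype.sum_of_injective e hein
        · intro j hj
          simp [Function.extend_apply' _ _ _ hj]
        · intro i
          simp [hein.extend_apply]
    · rintro _ ⟨⟨w, z⟩, ⟨⟨hw, hw1⟩, hz⟩, rfl⟩
      exact (convex_convexHull ℝ s).sum_mem (fun i _ => hw i) hw1
        (fun i _ => subset_convexHull ℝ s (hz i trivial))
  rw [himg]
  apply IsCompact.image
  · exact (isCompact_stdSimplex ℝ (Fin N)).prod (isCompact_univ_pi fun _ => hs)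
  · fun_prop

theorem aux_isClosed_rank (m n r : ℕ) :
    IsClosed {ψ : Fin m × Fin n → ℂ | schmidtRank ψ ≤ r} := by
  let L : (Fin m × Fin n → ℂ) →ₗ[ℂ] ((Fin n → ℂ) →L[ℂ] (Fin m → ℂ)) :=
    { toFun := fun ψ => LinearMap.toContinuousLinearMap
        (Matrix.toLin' (Matrix.of fun i j => ψ (i, j)))
      map_add' := by
        intro x y
        ext v i
        simp [Matrix.mulVec, dotProduct, add_mul, Finset.sum_add_distrib]
      map_smul' := by
        intro c x
        ext v i
        simp [Matrix.mulVec, dotProduct, Finset.mul_sum, mul_assoc] }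
  have hL : Continuous L := LinearMap.continuous_of_finiteDimensional L
  have ho := (isOpen_setOfPred_nat_le_rank (𝕜 := ℂ) (E := Fin n → ℂ) (F := Fin m → ℂ)
    (r + 1)).preimage hL
  rw [← isOpen_compl_iff]
  convert ho using 1
  ext ψ
  simp only [Set.mem_compl_iff, Set.mem_setOf_eq, Set.mem_preimage, not_le]
  have : LinearMap.rank (L ψ : (Fin n → ℂ) →ₗ[ℂ] (Fin m → ℂ)) = (schmidtRank ψ : Cardinal) := by
    rw [schmidtRank, Matrix.rank, LinearMap.rank, Module.finrank_eq_rank]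
    rfl
  rw [this]
  norm_cast

theorem aux_snle_add {m n : Type*} [Fintype m] [Fintype n] {ρ σ : Matrix (m × n) (m × n) ℂ}
    {r : ℕ} (h1 : SchmidtNumberLE ρ r) (h2 : SchmidtNumberLE σ r) :
    SchmidtNumberLE (ρ + σ) r := by
  obtain ⟨k, ψ, hψ, rfl⟩ := h1
  obtain ⟨l, φ, hφ, rfl⟩ := h2
  refine ⟨k + l, Fin.append ψ φ, ?_, ?_⟩
  · intro i
    refine Fin.addCases (fun i => ?_) (fun i => ?_) i
    · simpa using hψ i
    · simpa using hφ i
  · simp [Fin.sum_univ_add]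

theorem aux_rank_smul {m n : Type*} [Fintype m] [Fintype n] (c : ℂ) (ψ : m × n → ℂ) {r : ℕ}
    (h : schmidtRank ψ ≤ r) : schmidtRank (c • ψ) ≤ r := by
  classical
  refine le_trans ?_ h
  unfold schmidtRank
  have : (Matrix.of fun i j => (c • ψ) (i, j)) =
      (Matrix.of fun i j => ψ (i, j)) * (c • (1 : Matrix n n ℂ)) := by
    ext i j
    simp
  rw [this]
  exact Matrix.rank_mul_le_left _ _

theorem aux_vmv {m : Type*} (a : ℝ) (ha : 0 ≤ a) (ψ : m → ℂ) :
    Matrix.vecMulVec (((Real.sqrt a : ℝ) : ℂ) • ψ) (star (((Real.sqrt a : ℝ) : ℂ) • ψ)) =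
      a • Matrix.vecMulVec ψ (star ψ) := by
  ext i j
  have : ((Real.sqrt a : ℝ) : ℂ) * ((Real.sqrt a : ℝ) : ℂ) = a := by
    rw [← Complex.ofReal_mul, Real.mul_self_sqrt ha]
  simp only [Matrix.vecMulVec_apply, Pi.smul_apply, Pi.star_apply, smul_eq_mul, star_mul',
    Matrix.smul_apply, Complex.real_smul, Complex.star_def, Complex.conj_ofReal]
  rw [← this]
  ring

theorem aux_snle_smul {m n : Type*} [Fintype m] [Fintype n] {ρ : Matrix (m × n) (m × n) ℂ}
    {r : ℕ} (a : ℝ) (ha : 0 ≤ a) (h1 : SchmidtNumberLE ρ r) :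
    SchmidtNumberLE (a • ρ) r := by
  obtain ⟨k, ψ, hψ, rfl⟩ := h1
  refine ⟨k, fun i => ((Real.sqrt a : ℝ) : ℂ) • ψ i, fun i => aux_rank_smul _ _ (hψ i), ?_⟩
  simp only [aux_vmv a ha, Finset.smul_sum]

theorem aux_trace {m : Type*} [Fintype m] (ψ : m → ℂ) :
    (Matrix.vecMulVec ψ (star ψ)).trace = ((∑ p, ‖ψ p‖ ^ 2 : ℝ) : ℂ) := by
  simp only [Matrix.trace, Matrix.diag_apply, Matrix.vecMulVec_apply, Pi.star_apply,
    Complex.star_def, Complex.mul_conj']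
  push_cast
  rfl

theorem aux_convex (dA dB r : ℕ) :
    Convex ℝ {ρ : Matrix (Fin dA × Fin dB) (Fin dA × Fin dB) ℂ |
      IsDensityMatrix ρ ∧ SchmidtNumberLE ρ r} := by
  rintro ρ ⟨⟨hp, ht⟩, hs⟩ σ ⟨⟨hp', ht'⟩, hs'⟩ a b ha hb hab
  refine ⟨⟨(hp.smul ha).add (hp'.smul hb), ?_⟩,
    aux_snle_add (aux_snle_smul a ha hs) (aux_snle_smul b hb hs')⟩
  rw [Matrix.trace_add, Matrix.trace_smul, Matrix.trace_smul, ht, ht', ← add_smul, hab, one_smul]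

theorem aux_eq_hull (dA dB r : ℕ) :
    {ρ : Matrix (Fin dA × Fin dB) (Fin dA × Fin dB) ℂ |
      IsDensityMatrix ρ ∧ SchmidtNumberLE ρ r} =
    convexHull ℝ ((fun ψ : Fin dA × Fin dB → ℂ => Matrix.vecMulVec ψ (star ψ)) ''
      {ψ | schmidtRank ψ ≤ r ∧ ∑ p, ‖ψ p‖ ^ 2 = 1}) := by
  apply Set.Subset.antisymm
  · rintro ρ ⟨⟨-, ht⟩, k, ψ, hψ, rfl⟩
    set t : Fin k → ℝ := fun i => ∑ p, ‖ψ i p‖ ^ 2 with htdef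
    have ht0 : ∀ i, 0 ≤ t i := fun i => Finset.sum_nonneg fun p _ => sq_nonneg _
    have hsum : ∑ i, t i = 1 := by
      rw [Matrix.trace_sum] at ht
      simp only [aux_trace] at ht
      exact_mod_cast ht
    have hzero : ∀ i, t i = 0 → Matrix.vecMulVec (ψ i) (star (ψ i)) = 0 := by
      intro i hi
      have h := (Finset.sum_eq_zero_iff_of_nonneg (fun p _ => sq_nonneg _)).1 hi
      have : ψ i = 0 := by
        ext p
        simpa using h p (Finset.mem_univ _)
      rw [this]
      simp
    have heq : ∑ i, Matrix.vecMulVec (ψ i) (star (ψ i)) =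
        ∑ i with t i ≠ 0, t i • ((t i)⁻¹ • Matrix.vecMulVec (ψ i) (star (ψ i))) := by
      rw [Finset.sum_filter]
      refine Finset.sum_congr rfl fun i _ => ?_
      split_ifs with h
      · rw [smul_smul, mul_inv_cancel₀ h, one_smul]
      · exact hzero i (not_not.1 h)
    rw [heq]
    apply (convex_convexHull ℝ _).sum_mem (fun i _ => ht0 i)
    · rw [Finset.sum_filter_ne_zero, hsum]
    · intro i hi
      have hti : t i ≠ 0 := (Finset.mem_filter.1 hi).2
      apply subset_convexHull
      refine ⟨((Real.sqrt (t i)⁻¹ : ℝ) : ℂ) • ψ i, ⟨aux_rank_smul _ _ (hψ i), ?_⟩,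
        aux_vmv _ (inv_nonneg.2 (ht0 i)) _⟩
      have : ∀ p, ‖(((Real.sqrt (t i)⁻¹ : ℝ) : ℂ) • ψ i) p‖ ^ 2 = (t i)⁻¹ * ‖ψ i p‖ ^ 2 := by
        intro p
        rw [Pi.smul_apply, norm_smul, mul_pow, Complex.norm_real, Real.norm_eq_abs, sq_abs,
          Real.sq_sqrt (inv_nonneg.2 (ht0 i))]
      simp only [this]
      rw [← Finset.mul_sum]
      exact inv_mul_cancel₀ hti
  · apply convexHull_min _ (aux_convex dA dB r)
    rintro _ ⟨ψ, ⟨hψ, h1⟩, rfl⟩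
    refine ⟨⟨Matrix.posSemidef_vecMulVec_self_star ψ, ?_⟩, 1, fun _ => ψ, fun _ => hψ, by simp⟩
    simp only [aux_trace, h1, Complex.ofReal_one]

theorem aux_compact (dA dB r : ℕ) :
    IsCompact {ψ : Fin dA × Fin dB → ℂ | schmidtRank ψ ≤ r ∧ ∑ p, ‖ψ p‖ ^ 2 = 1} := by
  apply (isCompact_closedBall (0 : Fin dA × Fin dB → ℂ) 1).of_isClosed_subset
  · apply (aux_isClosed_rank dA dB r).inter
    exact isClosed_eq (by fun_prop) continuous_const
  · rintro ψ ⟨-, h⟩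
    rw [mem_closedBall_zero_iff, pi_norm_le_iff_of_nonneg zero_le_one]
    intro p
    have := Finset.single_le_sum (f := fun p => ‖ψ p‖ ^ 2) (fun p _ => sq_nonneg _)
      (Finset.mem_univ p)
    simp only [h] at this
    exact (sq_le_one_iff₀ (norm_nonneg _)).1 this

/-- the set `S_r` of density matrices with Schmidt number at most `r`
is convex and compact. -/
theorem schmidt_number_le_set_convex_compact (dA dB r : ℕ)
    (hdA : 0 < dA) (hdB : 0 < dB) (hr1 : 1 ≤ r) (hr2 : r ≤ min dA dB) :
    Convex ℝ {ρ : Matrix (Fin dA × Fin dB) (Fin dA × Fin dB) ℂ |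
      IsDensityMatrix ρ ∧ SchmidtNumberLE ρ r} ∧
    IsCompact {ρ : Matrix (Fin dA × Fin dB) (Fin dA × Fin dB) ℂ |
      IsDensityMatrix ρ ∧ SchmidtNumberLE ρ r} := by
  refine ⟨aux_convex dA dB r, ?_⟩
  rw [aux_eq_hull]
  apply aux_isCompact_convexHull
  apply (aux_compact dA dB r).image
  exact continuous_id.matrix_vecMulVec continuous_star
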